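/- The infimum of Cpe(l,m) over all integers l ≥ 3 and m with |m| ≤ l equals −175/(72π); that is, Cpe(l,m) ≥ −175/(72π) for all such (l,m), and for any sequence of integers (m_l)_{l≥3} with |m_l| ≤ l and lim_{l→∞} m_l/l = √(2/3), the values Cpe(l, m_l) converge to −175/(72π). -/

import Mathlib

/-- The common square term Q(l,m). -/
noncomputable def Qf (l : ℕ) (m : ℤ) : ℝ :=
  (1 / 8) * (((l : ℝ) ^ 2 - (m : ℝ) ^ 2) / ((2 * (l : ℝ) + 1) * (2 * (l : ℝ) - 1)) +
    (((l : ℝ) + 1) ^ 2 - (m : ℝ) ^ 2) / ((2 * (l : ℝ) + 3) * (2 * (l : ℝ) + 1)) - 1 / 5) ^ 2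

/-- The coefficient ϑ(l,m). -/
noncomputable def thf (l : ℕ) (m : ℤ) : ℝ :=
  (1 / 8) * ((((l : ℝ) + 2) ^ 2 - (m : ℝ) ^ 2) * (((l : ℝ) + 1) ^ 2 - (m : ℝ) ^ 2) *
      ((l : ℝ) + 1) * (l : ℝ)) /
    ((2 * (l : ℝ) + 3) ^ 2 * (2 * (l : ℝ) + 5) * (2 * (l : ℝ) + 1) * ((l : ℝ) + 2) * ((l : ℝ) + 3)) +
  (1 / 8) * ((((l : ℝ) - 1) ^ 2 - (m : ℝ) ^ 2) * ((l : ℝ) ^ 2 - (m : ℝ) ^ 2) *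
      ((l : ℝ) + 1) * (l : ℝ)) /
    ((2 * (l : ℝ) - 3) * (2 * (l : ℝ) - 1) ^ 2 * (2 * (l : ℝ) + 1) * ((l : ℝ) - 2) * ((l : ℝ) - 1)) +
  Qf l m

/-- The coefficient ϱ(l,m). -/
noncomputable def rhf (l : ℕ) (m : ℤ) : ℝ :=
  (1 / 8) * ((((l : ℝ) + 2) ^ 2 - (m : ℝ) ^ 2) * (((l : ℝ) + 1) ^ 2 - (m : ℝ) ^ 2)) /
    ((2 * (l : ℝ) + 1) * (2 * (l : ℝ) + 3) ^ 2 * (2 * (l : ℝ) + 5)) +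
  (1 / 8) * ((((l : ℝ) - 1) ^ 2 - (m : ℝ) ^ 2) * ((l : ℝ) ^ 2 - (m : ℝ) ^ 2)) /
    ((2 * (l : ℝ) - 3) * (2 * (l : ℝ) - 1) ^ 2 * (2 * (l : ℝ) + 1)) +
  Qf l m

/-- The coefficient γ(l,m). -/
noncomputable def gaf (l : ℕ) (m : ℤ) : ℝ :=
  (1 / 8) * ((((l : ℝ) + 2) ^ 2 - (m : ℝ) ^ 2) * (((l : ℝ) + 1) ^ 2 - (m : ℝ) ^ 2) *
      ((l : ℝ) + 2) * ((l : ℝ) + 3)) /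
    ((2 * (l : ℝ) + 1) * (2 * (l : ℝ) + 3) ^ 2 * (2 * (l : ℝ) + 5) * ((l : ℝ) + 1) * (l : ℝ)) +
  (1 / 8) * ((((l : ℝ) - 1) ^ 2 - (m : ℝ) ^ 2) * ((l : ℝ) ^ 2 - (m : ℝ) ^ 2) *
      ((l : ℝ) - 2) * ((l : ℝ) - 1)) /
    ((2 * (l : ℝ) - 3) * (2 * (l : ℝ) - 1) ^ 2 * (2 * (l : ℝ) + 1) * ((l : ℝ) + 1) * (l : ℝ)) +
  Qf l m

/-- The sectional curvature C(e⁰₃, e^m_l) of SDiff(𝕊²) (Theorem 5.3 of the paper). -/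
noncomputable def Cpe (l : ℕ) (m : ℤ) : ℝ :=
  -(525 * (m : ℝ) ^ 2 / (32 * Real.pi)) *
    (3 * gaf l m - 2 * (12 / ((l : ℝ) * ((l : ℝ) + 1)) + 1) * rhf l m -
      (12 / ((l : ℝ) * ((l : ℝ) + 1)) - 1) ^ 2 * thf l m)

noncomputable def auxD (v : ℝ) : ℝ := (4 - 3 * v) ^ 2 * (4 - 15 * v) * (1 - 2 * v) * (1 - 6 * v)

noncomputable def auxP0 (v : ℝ) : ℝ :=
  -1492/25 + 12359/25 * v - 60006/25 * v ^ 2 + 4698 * v ^ 3 - 76356/25 * v ^ 4 + 2592/5 * v ^ 5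

noncomputable def auxP1 (v : ℝ) : ℝ :=
  64 - 3032/5 * v + 1122 * v ^ 2 + 51219/5 * v ^ 3 - 74952/5 * v ^ 4 + 5184 * v ^ 5

noncomputable def auxP2 (v : ℝ) : ℝ :=
  -64 + 492 * v + 675 * v ^ 2 - 18036 * v ^ 3 + 12960 * v ^ 4

/-- The normalised curvature, in terms of `v = 1/(l(l+1))` and `w = m²/(l(l+1))`. -/
noncomputable def auxG (v w : ℝ) : ℝ :=
  (v * w * auxP0 v + w ^ 2 * auxP1 v + w ^ 3 * auxP2 v) / auxD v

theorem Cpe_eq (l : ℕ) (hl : 3 ≤ l) (m : ℤ) :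
    Cpe l m = -(525 / (32 * Real.pi)) *
      auxG (1 / ((l : ℝ) * ((l : ℝ) + 1))) ((m : ℝ) ^ 2 / ((l : ℝ) * ((l : ℝ) + 1))) := by
  have hl' : (3 : ℝ) ≤ (l : ℝ) := by exact_mod_cast hl
  unfold Cpe gaf rhf thf Qf auxG auxP0 auxP1 auxP2 auxD
  generalize (l : ℝ) = a at *
  generalize (m : ℝ) ^ 2 = x at *
  have h0 : a ≠ 0 := by linarith
  have h1 : a + 1 ≠ 0 := by linarith
  have h2 : a + 2 ≠ 0 := by linarith
  have h3 : a + 3 ≠ 0 := by linarith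
  have h4 : a - 1 ≠ 0 := by linarith
  have h5 : a - 2 ≠ 0 := by linarith
  have k1 : 2 * a + 1 ≠ 0 := by linarith
  have k2 : 2 * a + 3 ≠ 0 := by linarith
  have k3 : 2 * a + 5 ≠ 0 := by linarith
  have k4 : 2 * a - 1 ≠ 0 := by linarith
  have k5 : 2 * a - 3 ≠ 0 := by linarith
  have d1 : 4 - 3 * (1 / (a * (a + 1))) = (2 * a - 1) * (2 * a + 3) / (a * (a + 1)) := by
    field_simp; ring
  have d2 : 4 - 15 * (1 / (a * (a + 1))) = (2 * a - 3) * (2 * a + 5) / (a * (a + 1)) := by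
    field_simp; ring
  have d3 : 1 - 2 * (1 / (a * (a + 1))) = (a - 1) * (a + 2) / (a * (a + 1)) := by
    field_simp; ring
  have d4 : 1 - 6 * (1 / (a * (a + 1))) = (a - 2) * (a + 3) / (a * (a + 1)) := by
    field_simp; ring
  rw [d1, d2, d3, d4]
  have hpi := Real.pi_ne_zero
  rw [show -(525 * x / (32 * Real.pi)) = -(525 / (32 * Real.pi)) * x by ring, mul_assoc]
  congr 1
  clear d1 d2 d3 d4 h0 h1 h2 h3 h4 h5 k1 k2 k3 k4 k5
  obtain ⟨b, rfl⟩ : ∃ b, a = b + 3 := ⟨a - 3, by ring⟩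
  have hb : 0 ≤ b := by linarith
  rw [show b + 3 + 1 = b + 4 by ring, show b + 3 + 2 = b + 5 by ring,
    show b + 3 + 3 = b + 6 by ring, show b + 3 - 1 = b + 2 by ring,
    show b + 3 - 2 = b + 1 by ring, show 2 * (b + 3) + 1 = 2 * b + 7 by ring,
    show 2 * (b + 3) + 3 = 2 * b + 9 by ring, show 2 * (b + 3) + 5 = 2 * b + 11 by ring,
    show 2 * (b + 3) - 1 = 2 * b + 5 by ring, show 2 * (b + 3) - 3 = 2 * b + 3 by ring]
  have h0 : b + 1 ≠ 0 := by positivity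
  have h1 : b + 2 ≠ 0 := by positivity
  have h2 : b + 3 ≠ 0 := by positivity
  have h3 : b + 4 ≠ 0 := by positivity
  have h4 : b + 5 ≠ 0 := by positivity
  have h5 : b + 6 ≠ 0 := by positivity
  have k1 : 2 * b + 3 ≠ 0 := by positivity
  have k2 : 2 * b + 5 ≠ 0 := by positivity
  have k3 : 2 * b + 7 ≠ 0 := by positivity
  have k4 : 2 * b + 9 ≠ 0 := by positivity
  have k5 : 2 * b + 11 ≠ 0 := by positivity
  field_simp
  ring

theorem auxG_le (v w : ℝ) (hv0 : 0 ≤ v) (hv : v ≤ 1 / 12) (hw : 0 ≤ w) : auxG v w ≤ 4 / 27 := by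
  have hd : 0 < auxD v := by
    unfold auxD
    have : 0 < 4 - 3 * v := by linarith
    have : 0 < 4 - 15 * v := by linarith
    have : 0 < 1 - 2 * v := by linarith
    have : 0 < 1 - 6 * v := by linarith
    positivity
  unfold auxG
  rw [div_le_iff₀ hd]
  obtain ⟨e0, he0⟩ : ∃ e, e = -auxP0 v := ⟨_, rfl⟩
  obtain ⟨e1, he1⟩ : ∃ e : ℝ, e = -1208/5 + 2730 * v - 87894/5 * v ^ 2 + 104112/5 * v ^ 3
    - 6804 * v ^ 4 := ⟨_, rfl⟩
  obtain ⟨e2, he2⟩ : ∃ e : ℝ, e = 356 - 4527 * v + 25371 * v ^ 2 - 18792 * v ^ 3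
    + 1620 * v ^ 4 := ⟨_, rfl⟩
  have key : 4 / 27 * auxD v - (v * w * auxP0 v + w ^ 2 * auxP1 v + w ^ 3 * auxP2 v)
      = auxD v * ((w - 2 / 3) ^ 2 * (w + 1 / 3)) + v * w * (e0 + e1 * w + e2 * w ^ 2) := by
    rw [he0, he1, he2]; unfold auxD auxP0 auxP1 auxP2; ring
  have v3 : v ^ 3 ≤ v ^ 2 / 12 := by nlinarith [sq_nonneg v]
  have v4 : v ^ 4 ≤ v ^ 2 / 144 := by nlinarith [sq_nonneg v]
  have v7 : v ^ 7 ≤ v ^ 5 / 144 := by nlinarith [pow_nonneg hv0 5, pow_nonneg hv0 6]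
  have v9 : v ^ 9 ≤ v ^ 8 / 12 := by nlinarith [pow_nonneg hv0 8]
  have q3 := pow_nonneg hv0 3
  have q4 := pow_nonneg hv0 4
  have q5 := pow_nonneg hv0 5
  have q6 := pow_nonneg hv0 6
  have q8 := pow_nonneg hv0 8
  have he2pos : 0 < e2 := by
    rw [he2]; nlinarith [sq_nonneg (v - 1 / 11)]
  have hdisc : e1 ^ 2 - 4 * e0 * e2 ≤ 0 := by
    have : e1 ^ 2 - 4 * e0 * e2 = -665344/25 + 11637952/25 * v - 12397008/5 * v ^ 2
      - 30811932/25 * v ^ 3 + 1385971236/25 * v ^ 4 - 263872728/5 * v ^ 5 - 76259232/5 * v ^ 6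
      + 732055968/25 * v ^ 7 - 62320752/5 * v ^ 8 + 3359232 * v ^ 9 := by
      rw [he0, he1, he2]; unfold auxP0; ring
    rw [this]
    nlinarith [sq_nonneg (v - 1 / 9)]
  have hq : 0 ≤ e0 + e1 * w + e2 * w ^ 2 := by
    have : 0 ≤ 4 * e2 * (e0 + e1 * w + e2 * w ^ 2) := by
      nlinarith [sq_nonneg (2 * e2 * w + e1)]
    by_contra hneg
    push Not at hneg
    nlinarith
  have r1 : 0 ≤ auxD v * ((w - 2 / 3) ^ 2 * (w + 1 / 3)) := by positivity
  have r2 : 0 ≤ v * w * (e0 + e1 * w + e2 * w ^ 2) := by positivity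
  linarith

theorem auxG_tendsto {v w : ℕ → ℝ} (hv : Filter.Tendsto v Filter.atTop (nhds 0))
    (hw : Filter.Tendsto w Filter.atTop (nhds (2 / 3))) :
    Filter.Tendsto (fun l => auxG (v l) (w l)) Filter.atTop (nhds (4 / 27)) := by
  have hc : ContinuousAt (fun p : ℝ × ℝ => auxG p.1 p.2) (0, 2 / 3) := by
    unfold auxG auxD auxP0 auxP1 auxP2
    apply ContinuousAt.div
    · fun_prop
    · fun_prop
    · norm_num
  have h := hc.tendsto.comp (hv.prodMk_nhds hw)
  have e : auxG 0 (2 / 3) = 4 / 27 := by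
    unfold auxG auxD auxP0 auxP1 auxP2; norm_num
  simp only [e] at h
  exact h

theorem infimum_sectional_curvature_rp2 :
    (∀ l : ℕ, 3 ≤ l → ∀ m : ℤ, |m| ≤ (l : ℤ) →
      -(175 / (72 * Real.pi)) ≤ Cpe l m) ∧
    (∀ m : ℕ → ℤ, (∀ l : ℕ, 3 ≤ l → |m l| ≤ (l : ℤ)) →
      Filter.Tendsto (fun l : ℕ => (m l : ℝ) / (l : ℝ)) Filter.atTop
        (nhds (Real.sqrt (2 / 3))) →
      Filter.Tendsto (fun l : ℕ => Cpe l (m l)) Filter.atTop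
        (nhds (-(175 / (72 * Real.pi))))) := by
  have hpi := Real.pi_pos
  have hconst : -(175 / (72 * Real.pi)) = -(525 / (32 * Real.pi)) * (4 / 27) := by
    field_simp; norm_num
  constructor
  · intro l hl m _
    have hl' : (3 : ℝ) ≤ (l : ℝ) := by exact_mod_cast hl
    rw [Cpe_eq l hl m, hconst]
    have hb : auxG (1 / ((l : ℝ) * ((l : ℝ) + 1))) ((m : ℝ) ^ 2 / ((l : ℝ) * ((l : ℝ) + 1)))
        ≤ 4 / 27 := by
      apply auxG_le
      · positivity
      · apply one_div_le_one_div_of_le (by norm_num); nlinarith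
      · positivity
    have hp : 0 < 525 / (32 * Real.pi) := by positivity
    nlinarith
  · intro m _ hm
    rw [hconst]
    have hu : Filter.Tendsto (fun l : ℕ => 1 / ((l : ℝ) + 1)) Filter.atTop (nhds 0) :=
      tendsto_one_div_add_atTop_nhds_zero_nat
    have hu' : Filter.Tendsto (fun l : ℕ => 1 / (l : ℝ)) Filter.atTop (nhds 0) :=
      tendsto_one_div_atTop_nhds_zero_nat
    have hv : Filter.Tendsto (fun l : ℕ => 1 / ((l : ℝ) * ((l : ℝ) + 1))) Filter.atTop
        (nhds 0) := by
      have := hu'.mul hu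
      rw [mul_zero] at this
      refine this.congr fun l => ?_
      rw [one_div_mul_one_div]
    have hw : Filter.Tendsto (fun l : ℕ => (m l : ℝ) ^ 2 / ((l : ℝ) * ((l : ℝ) + 1)))
        Filter.atTop (nhds (2 / 3)) := by
      have h := (hm.pow 2).mul (hu.const_sub 1)
      rw [Real.sq_sqrt (by norm_num), sub_zero, mul_one] at h
      refine h.congr' ?_
      filter_upwards [Filter.eventually_ge_atTop 3] with l hl
      have hl' : (3 : ℝ) ≤ (l : ℝ) := by exact_mod_cast hl
      have : (l : ℝ) ≠ 0 := by linarith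
      have : (l : ℝ) + 1 ≠ 0 := by linarith
      field_simp
      ring
    refine ((auxG_tendsto hv hw).const_mul (-(525 / (32 * Real.pi)))).congr' ?_
    filter_upwards [Filter.eventually_ge_atTop 3] with l hl
    exact (Cpe_eq l hl (m l)).symm
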